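/- Let (α, β) be an admissible and non-null pair, and assume there is no x ∈ (0,1) such that π_x(α) = π_x(β). Then for every a ∈ (1,2] there exists p with 1 − 1/a ≤ p ≤ 1/a such that the uniform overlapping function f_{(a,p,+)} satisfies f_{(a,p,+)}(π_{1/a}(ω)) = π_{1/a}(Sω) for all ω ∈ Ω_{(α,β,+)}. -/

import Mathlib

open Filter Set

/-- The space of infinite binary strings. -/
abbrev Omega := ℕ → Bool

/-- Numerical value of a bit. -/
def b2r (b : Bool) : ℝ := if b then 1 else 0

/-- The projection map `π_x(ω) = (1-x) ∑ ω_k x^k`. -/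
noncomputable def proj (x : ℝ) (ω : Omega) : ℝ := (1 - x) * ∑' k : ℕ, b2r (ω k) * x ^ k

/-- The shift map. -/
def shift (ω : Omega) : Omega := fun n => ω (n + 1)

/-- Strict lexicographic order on binary strings. -/
def lexLt (σ ω : Omega) : Prop := ∃ k : ℕ, (∀ i < k, σ i = ω i) ∧ σ k = false ∧ ω k = true

/-- Lexicographic order on binary strings. -/
def lexLe (σ ω : Omega) : Prop := σ = ω ∨ lexLt σ ω

/-- An admissible pair of binary strings. -/
def admissible (α β : Omega) : Prop :=
  α 0 = false ∧ α 1 = true ∧ β 0 = true ∧ β 1 = false ∧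
  (∀ n : ℕ, ¬ (lexLt α (shift^[n] α) ∧ lexLe (shift^[n] α) β)) ∧
  (∀ n : ℕ, ¬ (lexLe α (shift^[n] β) ∧ lexLt (shift^[n] β) β))

/-- The address space `Ω_{(α,β,-)}`. -/
def addrMinus (α β : Omega) : Set Omega :=
  {ω | ∀ n : ℕ, ¬ (lexLt α (shift^[n] ω) ∧ lexLe (shift^[n] ω) β)}

/-- The address space `Ω_{(α,β,+)}`. -/
def addrPlus (α β : Omega) : Set Omega :=
  {ω | ∀ n : ℕ, ¬ (lexLe α (shift^[n] ω) ∧ lexLt (shift^[n] ω) β)}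

/-- The address space `Ω_{(α,β)}`. -/
def addr (α β : Omega) : Set Omega := addrMinus α β ∪ addrPlus α β

/-- The exponential growth rate `h(Γ) = limsup (1/n) ln |Γ_n|`, where `Γ_n` is the set of
length-`(n+1)` prefixes of members of `Γ`. -/
noncomputable def growthRate (Γ : Set Omega) : ℝ :=
  Filter.limsup
    (fun n : ℕ => Real.log ((fun ω : Omega => fun i : Fin (n + 1) => ω i.val) '' Γ).ncard / n)
    Filter.atTop

/-- The uniform overlapping function `f_{(a,p,-)}`. -/
noncomputable def fMinus (a p : ℝ) : ℝ → ℝ := fun x => if x ≤ p then a * x else a * x + (1 - a)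

/-- The uniform overlapping function `f_{(a,p,+)}`. -/
noncomputable def fPlus (a p : ℝ) : ℝ → ℝ := fun x => if x < p then a * x else a * x + (1 - a)

/-- The itinerary map `τ_{(a,p,-)}`: the `n`-th bit is `1` iff `f^n(x) ∈ I₁ = (p,1]`. -/
noncomputable def itinMinus (a p x : ℝ) : Omega := fun n => decide (p < (fMinus a p)^[n] x)

/-- The itinerary map `τ_{(a,p,+)}`: the `n`-th bit is `1` iff `f^n(x) ∈ I₁ = [p,1]`. -/
noncomputable def itinPlus (a p x : ℝ) : Omega := fun n => decide (p ≤ (fPlus a p)^[n] x)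

/-!
Write `A` and `B` for the strings of the address space `Ω_{(α,β)}` that begin with `0` and with
`1`; then `ω ≼ α` on `A` and `β ≼ ω` on `B`. Put `δ(x) = π_x β - π_x α`. It is `1` at `x = 0`, is
continuous, and has no zero in `(0,1)`, so it is positive on `[0,1)`.

The key claim is that for all `x ∈ [0,1)` the point `π_x α` bounds `π_x A` from above and `π_x β`
bounds `π_x B` from below (`Separated`). It rests on a self-improvement (`separated_of_half_gap`):
if these bounds hold up to an error `δ(x)/2`, they hold exactly. Indeed, if `ω ∈ A` first differs
from `α` at index `k`, then `π_x ω - π_x α = x^k (π_x (S^k ω) - π_x (S^k α))` with `S^k ω ∈ A` and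
`S^k α ∈ B`, and the approximate bounds make the bracket at most `δ/2 + δ/2 - δ = 0`. As `π_x ω`
is continuous in `x` uniformly in `ω` (`abs_proj_sub_le`), the set of good `x` is open as well as
closed, and it contains `0`, so it is all of `[0,1)`.

For `x = 1/a` the theorem then holds with `p = min (π_x β) x`; the minimum with `x` is needed
because `π_x β` itself may exceed `1/a`.
-/

/-! ### The projection map -/

lemma b2r_nonneg (b : Bool) : 0 ≤ b2r b := by cases b <;> simp [b2r]

lemma b2r_le_one (b : Bool) : b2r b ≤ 1 := by cases b <;> simp [b2r]

lemma summable_proj {x : ℝ} (hx0 : 0 ≤ x) (hx1 : x < 1) (ω : Omega) :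
    Summable fun k : ℕ => b2r (ω k) * x ^ k := by
  refine Summable.of_nonneg_of_le (fun k => mul_nonneg (b2r_nonneg _) (pow_nonneg hx0 k))
    (fun k => ?_) (summable_geometric_of_lt_one hx0 hx1)
  exact mul_le_of_le_one_left (pow_nonneg hx0 k) (b2r_le_one _)

lemma proj_nonneg {x : ℝ} (hx0 : 0 ≤ x) (hx1 : x < 1) (ω : Omega) : 0 ≤ proj x ω :=
  mul_nonneg (by linarith) (tsum_nonneg fun k => mul_nonneg (b2r_nonneg _) (pow_nonneg hx0 k))

lemma proj_le_one {x : ℝ} (hx0 : 0 ≤ x) (hx1 : x < 1) (ω : Omega) : proj x ω ≤ 1 := by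
  have h1 : ∑' k : ℕ, b2r (ω k) * x ^ k ≤ (1 - x)⁻¹ := by
    rw [← tsum_geometric_of_lt_one hx0 hx1]
    exact (summable_proj hx0 hx1 ω).tsum_le_tsum
      (fun k => mul_le_of_le_one_left (pow_nonneg hx0 k) (b2r_le_one _))
      (summable_geometric_of_lt_one hx0 hx1)
  have h2 : 0 < 1 - x := by linarith
  calc proj x ω ≤ (1 - x) * (1 - x)⁻¹ := mul_le_mul_of_nonneg_left h1 h2.le
    _ = 1 := mul_inv_cancel₀ h2.ne'

lemma proj_eq_shift {x : ℝ} (hx0 : 0 ≤ x) (hx1 : x < 1) (ω : Omega) :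
    proj x ω = (1 - x) * b2r (ω 0) + x * proj x (shift ω) := by
  unfold proj
  rw [(summable_proj hx0 hx1 ω).tsum_eq_zero_add]
  have : ∑' k : ℕ, b2r (ω (k + 1)) * x ^ (k + 1) = x * ∑' k : ℕ, b2r (shift ω k) * x ^ k := by
    rw [← tsum_mul_left]
    refine tsum_congr fun k => ?_
    simp only [shift]
    ring
  rw [this]
  ring

lemma proj_of_zero {x : ℝ} (hx0 : 0 ≤ x) (hx1 : x < 1) {ω : Omega} (h : ω 0 = false) :
    proj x ω = x * proj x (shift ω) := by
  rw [proj_eq_shift hx0 hx1, h]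
  simp [b2r]

lemma proj_of_one {x : ℝ} (hx0 : 0 ≤ x) (hx1 : x < 1) {ω : Omega} (h : ω 0 = true) :
    proj x ω = (1 - x) + x * proj x (shift ω) := by
  rw [proj_eq_shift hx0 hx1, h]
  simp [b2r]

lemma proj_lt_one {x : ℝ} (hx0 : 0 < x) (hx1 : x < 1) (k : ℕ) :
    ∀ ω : Omega, ω k = false → proj x ω < 1 := by
  induction k with
  | zero =>
    intro ω h
    rw [proj_of_zero hx0.le hx1 h]
    nlinarith [proj_le_one hx0.le hx1 (shift ω)]
  | succ k ih =>
    intro ω h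
    have h1 := ih (shift ω) h
    have h2 := proj_nonneg hx0.le hx1 (shift ω)
    rw [proj_eq_shift hx0.le hx1]
    have h3 := mul_lt_mul_of_pos_left h1 hx0
    have h4 := mul_le_mul_of_nonneg_left (b2r_le_one (ω 0)) (sub_nonneg.mpr hx1.le)
    linarith

lemma shift_iterate_apply (k n : ℕ) (ω : Omega) : shift^[k] ω n = ω (n + k) := by
  induction k generalizing ω with
  | zero => rfl
  | succ k ih => rw [Function.iterate_succ_apply, ih]; simp only [shift]; congr 1

/-- A common prefix of length `k` contracts the distance of the projections by `x ^ k`. -/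
lemma proj_sub_proj {x : ℝ} (hx0 : 0 ≤ x) (hx1 : x < 1) (k : ℕ) :
    ∀ ω σ : Omega, (∀ i < k, ω i = σ i) →
      proj x ω - proj x σ = x ^ k * (proj x (shift^[k] ω) - proj x (shift^[k] σ)) := by
  induction k with
  | zero => intro ω σ _; simp
  | succ k ih =>
    intro ω σ h
    have h1 := ih (shift ω) (shift σ) fun i hi => h (i + 1) (by omega)
    rw [Function.iterate_succ_apply, Function.iterate_succ_apply, proj_eq_shift hx0 hx1 ω,
      proj_eq_shift hx0 hx1 σ, h 0 (by omega), pow_succ]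
    linear_combination x * h1

/-- A modulus of continuity of `x ↦ π_x ω` that does not depend on `ω`. -/
lemma abs_proj_sub_le {x y : ℝ} (hx0 : 0 ≤ x) (hx1 : x < 1) (hy0 : 0 ≤ y) (hy1 : y < 1)
    (ω : Omega) : |proj y ω - proj x ω| ≤ |y - x| / (1 - x) := by
  have hx : 0 < 1 - x := by linarith
  -- Iterating the shift recursion `n` times leaves an error `x ^ n`.
  have key : ∀ n : ℕ, ∀ ω : Omega, |proj y ω - proj x ω| ≤ |y - x| / (1 - x) + x ^ n := by
    intro n
    induction n with
    | zero =>
      intro ω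
      have h1 : 0 ≤ |y - x| / (1 - x) := by positivity
      rw [pow_zero, abs_le]
      constructor <;>
      linarith [proj_nonneg hx0 hx1 ω, proj_le_one hx0 hx1 ω, proj_nonneg hy0 hy1 ω,
        proj_le_one hy0 hy1 ω]
    | succ n ih =>
      intro ω
      have e : proj y ω - proj x ω = (y - x) * (proj y (shift ω) - b2r (ω 0))
          + x * (proj y (shift ω) - proj x (shift ω)) := by
        rw [proj_eq_shift hx0 hx1 ω, proj_eq_shift hy0 hy1 ω]
        ring
      have h1 : |proj y (shift ω) - b2r (ω 0)| ≤ 1 := by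
        rw [abs_le]
        constructor <;> linarith [proj_nonneg hy0 hy1 (shift ω), proj_le_one hy0 hy1 (shift ω),
          b2r_nonneg (ω 0), b2r_le_one (ω 0)]
      calc |proj y ω - proj x ω|
          ≤ |y - x| * |proj y (shift ω) - b2r (ω 0)|
            + x * |proj y (shift ω) - proj x (shift ω)| := by
            rw [e]
            refine (abs_add_le _ _).trans ?_
            rw [abs_mul, abs_mul, abs_of_nonneg hx0]
        _ ≤ |y - x| * 1 + x * (|y - x| / (1 - x) + x ^ n) := by
            gcongr
            exact ih _
        _ = |y - x| / (1 - x) + x ^ (n + 1) := by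
            field_simp
            ring
  have hlim : Tendsto (fun n : ℕ => |y - x| / (1 - x) + x ^ n) atTop
      (nhds (|y - x| / (1 - x) + 0)) :=
    tendsto_const_nhds.add (tendsto_pow_atTop_nhds_zero_of_lt_one hx0 hx1)
  simpa using ge_of_tendsto' hlim fun n => key n ω

lemma continuousOn_proj (ω : Omega) : ContinuousOn (fun x => proj x ω) (Set.Ico 0 1) := by
  intro x hx
  rw [ContinuousWithinAt, tendsto_iff_dist_tendsto_zero]
  have hlim : Tendsto (fun y : ℝ => |y - x| / (1 - x)) (nhdsWithin x (Set.Ico 0 1)) (nhds 0) := by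
    have : Continuous fun y : ℝ => |y - x| / (1 - x) := by fun_prop
    simpa using (this.tendsto x).mono_left nhdsWithin_le_nhds
  refine squeeze_zero' (Eventually.of_forall fun y => dist_nonneg) ?_ hlim
  filter_upwards [self_mem_nhdsWithin] with y hy
  rw [Real.dist_eq]
  exact abs_proj_sub_le hx.1 hx.2 hy.1 hy.2 ω

/-! ### Lexicographic order and address spaces -/

lemma lexLt_trichotomy (σ ω : Omega) : lexLt σ ω ∨ σ = ω ∨ lexLt ω σ := by
  by_cases h : σ = ω
  · exact Or.inr (Or.inl h)
  have hex : ∃ k, σ k ≠ ω k := Function.ne_iff.mp h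
  classical
  have h1 := Nat.find_spec hex
  have h2 : ∀ i < Nat.find hex, σ i = ω i := fun i hi => not_not.mp (Nat.find_min hex hi)
  cases hs : σ (Nat.find hex) <;> cases ho : ω (Nat.find hex)
  · exact absurd (hs.trans ho.symm) h1
  · exact Or.inl ⟨_, h2, hs, ho⟩
  · exact Or.inr (Or.inr ⟨_, fun i hi => (h2 i hi).symm, ho, hs⟩)
  · exact absurd (hs.trans ho.symm) h1

lemma lexLt_of_zero_one {σ ω : Omega} (hσ : σ 0 = false) (hω : ω 0 = true) : lexLt σ ω :=
  ⟨0, by simp, hσ, hω⟩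

lemma lexLe_of_not_lexLt {σ ω : Omega} (h : ¬ lexLt ω σ) : lexLe σ ω := by
  rcases lexLt_trichotomy σ ω with h1 | h1 | h1
  · exact Or.inr h1
  · exact Or.inl h1
  · exact absurd h1 h

lemma lexLt_of_not_lexLe {σ ω : Omega} (h : ¬ lexLe ω σ) : lexLt σ ω := by
  rcases lexLt_trichotomy σ ω with h1 | h1 | h1
  · exact h1
  · exact absurd (Or.inl h1.symm) h
  · exact absurd (Or.inr h1) h

lemma shift_iterate_mem_addr {α β ω : Omega} (k : ℕ) (h : ω ∈ addr α β) :
    shift^[k] ω ∈ addr α β := by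
  rcases h with h | h
  · refine Or.inl fun n => ?_
    rw [← Function.iterate_add_apply]
    exact h _
  · refine Or.inr fun n => ?_
    rw [← Function.iterate_add_apply]
    exact h _

lemma lexLt_left_of_addrPlus {α β ω : Omega} (hβ : β 0 = true) (h : ω ∈ addrPlus α β)
    (h0 : ω 0 = false) : lexLt ω α :=
  lexLt_of_not_lexLe fun h1 => h 0 ⟨h1, lexLt_of_zero_one h0 hβ⟩

lemma lexLe_left_of_addr {α β ω : Omega} (hβ : β 0 = true) (h : ω ∈ addr α β)
    (h0 : ω 0 = false) : lexLe ω α := by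
  rcases h with h | h
  · exact lexLe_of_not_lexLt fun h1 => h 0 ⟨h1, Or.inr (lexLt_of_zero_one h0 hβ)⟩
  · exact Or.inr (lexLt_left_of_addrPlus hβ h h0)

lemma lexLe_right_of_addr {α β ω : Omega} (hα : α 0 = false) (h : ω ∈ addr α β)
    (h0 : ω 0 = true) : lexLe β ω := by
  rcases h with h | h
  · exact Or.inr (lexLt_of_not_lexLe fun h1 => h 0 ⟨lexLt_of_zero_one hα h0, h1⟩)
  · exact lexLe_of_not_lexLt fun h1 => h 0 ⟨Or.inr (lexLt_of_zero_one hα h0), h1⟩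

lemma admissible.left_mem {α β : Omega} (h : admissible α β) : α ∈ addr α β :=
  Or.inl h.2.2.2.2.1

lemma admissible.right_mem {α β : Omega} (h : admissible α β) : β ∈ addr α β :=
  Or.inr h.2.2.2.2.2

/-! ### Separation of the two halves of the address space -/

/-- Up to an error `m`, the point `π_x α` bounds from above the projections of the addresses
beginning with `0`, and `π_x β` bounds from below those of the addresses beginning with `1`. -/
def SeparatedUpTo (α β : Omega) (m x : ℝ) : Prop :=
  ∀ ω ∈ addr α β, (ω 0 = false → proj x ω ≤ proj x α + m) ∧
    (ω 0 = true → proj x β ≤ proj x ω + m)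

/-- The exact form of `SeparatedUpTo`, without error. -/
def Separated (α β : Omega) (x : ℝ) : Prop := SeparatedUpTo α β 0 x

/-- Self-improvement: separation up to half the gap `π_x β - π_x α` is exact separation. -/
lemma separated_of_half_gap {α β : Omega} (hadm : admissible α β) {x : ℝ} (hx0 : 0 ≤ x)
    (hx1 : x < 1) (h : SeparatedUpTo α β ((proj x β - proj x α) / 2) x) :
    Separated α β x := by
  -- Two addresses that differ first at index `k` have a tail on either side of the gap.
  have key : ∀ ω ∈ addr α β, ∀ σ ∈ addr α β, lexLe ω σ → proj x ω ≤ proj x σ := by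
    rintro ω hω σ hσ (rfl | ⟨k, hk, h0, h1⟩)
    · exact le_rfl
    have e := proj_sub_proj hx0 hx1 k ω σ hk
    have hl := (h _ (shift_iterate_mem_addr k hω)).1 (by simpa [shift_iterate_apply] using h0)
    have hr := (h _ (shift_iterate_mem_addr k hσ)).2 (by simpa [shift_iterate_apply] using h1)
    nlinarith [pow_nonneg hx0 k]
  refine fun ω hω => ⟨fun h0 => ?_, fun h0 => ?_⟩
  · rw [add_zero]
    exact key _ hω _ hadm.left_mem (lexLe_left_of_addr hadm.2.2.1 hω h0)
  · rw [add_zero]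
    exact key _ hadm.right_mem _ hω (lexLe_right_of_addr hadm.1 hω h0)

/-- The gap `π_x β - π_x α` equals `1` at `x = 0` and cannot change sign without a zero. -/
lemma proj_left_lt_right {α β : Omega} (hadm : admissible α β)
    (h : ¬ ∃ x ∈ Set.Ioo (0 : ℝ) 1, proj x α = proj x β) {x : ℝ} (hx0 : 0 ≤ x) (hx1 : x < 1) :
    proj x α < proj x β := by
  have hα0 : proj 0 α = 0 := by rw [proj_of_zero le_rfl zero_lt_one hadm.1]; simp
  have hβ0 : proj 0 β = 1 := by rw [proj_of_one le_rfl zero_lt_one hadm.2.2.1]; simp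
  by_contra! hle
  have hsub : Set.Icc 0 x ⊆ Set.Ico (0 : ℝ) 1 := fun y hy => ⟨hy.1, hy.2.trans_lt hx1⟩
  have hc : ContinuousOn (fun y => proj y β - proj y α) (Set.Icc 0 x) :=
    ((continuousOn_proj β).sub (continuousOn_proj α)).mono hsub
  obtain ⟨y, hy, hy2⟩ := intermediate_value_Icc' hx0 hc
    (show (0 : ℝ) ∈ Set.Icc _ _ from ⟨by linarith, by simp [hα0, hβ0]⟩)
  have hy3 : proj y β - proj y α = 0 := hy2
  rcases hy.1.eq_or_lt with h0 | h0
  · rw [← h0, hα0, hβ0] at hy3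
    norm_num at hy3
  · exact h ⟨y, ⟨h0, (hsub hy).2⟩, by linarith⟩

lemma separated {α β : Omega} (hadm : admissible α β)
    (h : ¬ ∃ x ∈ Set.Ioo (0 : ℝ) 1, proj x α = proj x β) {r : ℝ} (hr0 : 0 ≤ r) (hr1 : r < 1) :
    Separated α β r := by
  have hsub : Set.Icc 0 r ⊆ Set.Ico (0 : ℝ) 1 := fun y hy => ⟨hy.1, hy.2.trans_lt hr1⟩
  have hcont : ∀ ω : Omega, ContinuousOn (fun x => proj x ω) (Set.Icc 0 r) :=
    fun ω => (continuousOn_proj ω).mono hsub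
  have hclosed : IsClosed ({x | Separated α β x} ∩ Set.Icc 0 r) := by
    have e : {x | Separated α β x} ∩ Set.Icc 0 r = Set.Icc 0 r ∩
        (⋂ ω ∈ addr α β,
          ((⋂ _ : ω 0 = false, {x ∈ Set.Icc 0 r | proj x ω ≤ proj x α + 0}) ∩
          ⋂ _ : ω 0 = true, {x ∈ Set.Icc 0 r | proj x β ≤ proj x ω + 0})) := by
      ext x
      simp only [Separated, SeparatedUpTo, Set.mem_inter_iff, Set.mem_ofPred_eq, Set.mem_iInter]
      grind
    rw [e]
    refine isClosed_Icc.inter (isClosed_biInter fun ω _ => IsClosed.inter ?_ ?_)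
    · exact isClosed_iInter fun _ => isClosed_Icc.isClosed_le (hcont ω)
        ((hcont α).add continuousOn_const)
    · exact isClosed_iInter fun _ => isClosed_Icc.isClosed_le (hcont β)
        ((hcont ω).add continuousOn_const)
  have hzero : (0 : ℝ) ∈ {x | Separated α β x} := by
    refine fun ω _ => ⟨fun h0 => ?_, fun h0 => ?_⟩
    · rw [proj_of_zero le_rfl zero_lt_one h0, proj_of_zero le_rfl zero_lt_one hadm.1]
      simp
    · rw [proj_of_one le_rfl zero_lt_one h0, proj_of_one le_rfl zero_lt_one hadm.2.2.1]
      simp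
  refine hclosed.Icc_subset_of_forall_mem_nhdsWithin hzero ?_ (Set.right_mem_Icc.mpr hr0)
  rintro x ⟨hx, hxr⟩
  have hx1 : x < 1 := hxr.2.trans hr1
  have hgap := proj_left_lt_right hadm h hxr.1 hx1
  have hlim : Tendsto (fun y : ℝ => |y - x| / (1 - x)) (nhdsWithin x (Set.Ioi x)) (nhds 0) := by
    have : Continuous fun y : ℝ => |y - x| / (1 - x) := by fun_prop
    simpa using (this.tendsto x).mono_left nhdsWithin_le_nhds
  -- With `δ = π_β - π_α`, each projection moves by at most `δ(x)/8`, so the error at `y` is at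
  -- most `δ(x)/4`, which is less than half the gap `δ(y) ≥ 3δ(x)/4`.
  filter_upwards [hlim.eventually_lt_const (show 0 < (proj x β - proj x α) / 8 by linarith),
    Ioo_mem_nhdsGT hx1] with y hy hy1
  have hy0 : 0 ≤ y := hxr.1.trans hy1.1.le
  have hd : ∀ ω : Omega, |proj y ω - proj x ω| ≤ (proj x β - proj x α) / 8 :=
    fun ω => (abs_proj_sub_le hxr.1 hx1 hy0 hy1.2 ω).trans hy.le
  refine separated_of_half_gap hadm hy0 hy1.2 fun ω hω => ?_
  have h1 := abs_le.mp (hd ω)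
  have h2 := abs_le.mp (hd α)
  have h3 := abs_le.mp (hd β)
  refine ⟨fun h0 => ?_, fun h0 => ?_⟩
  · linarith [(hx ω hω).1 h0]
  · linarith [(hx ω hω).2 h0]

/-- If (α,β) is admissible, non-null, and no x ∈ (0,1) satisfies π_x α = π_x β, then for every
a ∈ (1,2] there is p ∈ [1-1/a, 1/a] with f_{(a,p,+)}(π_{1/a} ω) = π_{1/a}(Sω) for all
ω ∈ Ω_{(α,β,+)}. -/
theorem stmt12 (α β : Omega) (hadm : admissible α β) (hnn : 0 < growthRate (addr α β))
    (h : ¬ ∃ x ∈ Set.Ioo (0 : ℝ) 1, proj x α = proj x β) :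
    ∀ a : ℝ, 1 < a → a ≤ 2 → ∃ p : ℝ, 1 - 1 / a ≤ p ∧ p ≤ 1 / a ∧
      ∀ ω ∈ addrPlus α β, fPlus a p (proj (1 / a) ω) = proj (1 / a) (shift ω) := by
  intro a ha1 ha2
  have ha0 : 0 < a := by linarith
  obtain ⟨x, hx⟩ : ∃ x, x = 1 / a := ⟨_, rfl⟩
  have hax : a * x = 1 := by rw [hx]; field_simp
  have hx0 : 0 < x := by rw [hx]; positivity
  have hx1 : x < 1 := by nlinarith
  have hx2 : 1 - x ≤ x := by nlinarith
  rw [← hx]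
  have hsep := separated hadm h hx0.le hx1
  have hgap := proj_left_lt_right hadm h hx0.le hx1
  refine ⟨min (proj x β) x, le_min ?_ hx2, min_le_right _ _, fun ω hω => ?_⟩
  · rw [proj_of_one hx0.le hx1 hadm.2.2.1]
    nlinarith [proj_nonneg hx0.le hx1 (shift β)]
  cases h0 : ω 0
  · have e := proj_of_zero hx0.le hx1 h0
    have hlt : proj x ω < min (proj x β) x := by
      refine lt_min ?_ ?_
      · linarith [(hsep ω (Or.inr hω)).1 h0]
      · -- `ω ≺ α` provides a second zero of `ω`, so `ω` is not `0111⋯`, the only string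
        -- beginning with `0` whose projection is `x`.
        obtain ⟨k, hk, hk0, hk1⟩ := lexLt_left_of_addrPlus hadm.2.2.1 hω h0
        cases k with
        | zero => rw [hadm.1] at hk1; cases hk1
        | succ k =>
          have := proj_lt_one hx0 hx1 k (shift ω) hk0
          rw [e]
          nlinarith
    rw [fPlus, if_pos hlt, e, ← mul_assoc, hax, one_mul]
  · have hle : min (proj x β) x ≤ proj x ω :=
      (min_le_left _ _).trans (by linarith [(hsep ω (Or.inr hω)).2 h0])
    rw [fPlus, if_neg (not_lt.mpr hle), proj_of_one hx0.le hx1 h0]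
    linear_combination (proj x (shift ω) - 1) * hax
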